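/- arXiv:2107.02999 — 4 statements merged into one kernel-verified Lean document; each statement's English description precedes it below -/
import Mathlib

section
/- Let 0 ≤ q < 1 and let Ω ∈ U_q(s_p, M_p) be a p×p matrix with inverse Σ = Ω^{-1}. Let Σ̂ ∈ ℝ^{p×p} be a symmetric matrix and let λ ≥ 0 satisfy λ ≥ 3‖Ω‖_{L1}‖Σ̂ − Σ‖_∞ and ‖Ω‖_{L1}^{−q} λ^{1−q} s_p ≤ 1/2. Fix i ∈ {1,…,p} and set β* = Ω e_i (the i-th column of Ω, where e_i is the i-th standard basis vector). Then every global minimizer β̂ over ℝ^p of the function β ↦ (1/2)βᵀΣ̂β − e_iᵀβ + λ|β|_1 satisfies |β̂ − β*|_1 ≤ 16 ‖Ω‖_{L1}^{1−q} s_p λ^{1−q}. -/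
open Matrix
open scoped BigOperators

/-- The ℓ1 norm of a vector in ℝ^p. -/
noncomputable def vecL1 {p : ℕ} (a : Fin p → ℝ) : ℝ := ∑ i, |a i|

/-- The entrywise supremum norm of a p×p matrix. -/
noncomputable def matLinf {p : ℕ} (A : Matrix (Fin p) (Fin p) ℝ) : ℝ := ⨆ i, ⨆ j, |A i j|

/-- The maximum absolute column-sum norm of a p×p matrix. -/
noncomputable def matL1 {p : ℕ} (A : Matrix (Fin p) (Fin p) ℝ) : ℝ := ⨆ j, ∑ i, |A i j|

/-- The SCIO objective function β ↦ (1/2)βᵀ Σ̂ β − eᵀβ + λ|β|₁. -/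
noncomputable def scioObj {p : ℕ} (S : Matrix (Fin p) (Fin p) ℝ) (e : Fin p → ℝ)
    (lam : ℝ) (β : Fin p → ℝ) : ℝ :=
  (1 / 2) * (β ⬝ᵥ S.mulVec β) - e ⬝ᵥ β + lam * vecL1 β

/-!
Comparing the objective along the lines through a minimizer `β̂` gives both `|Σ̂β̂ - e|_∞ ≤ λ` and
`0 ≤ dᵀΣ̂d` for every `d`. Write `h = β̂ - β*`. Since `Σ̂` is close to `Ω⁻¹`, the first of these
gives `|h|_∞ ≤ 4/3 ‖Ω‖_{L1} λ + λ/3 |h|₁`. The second turns the minimality `f(β̂) ≤ f(β*)` of the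
objective `f` into `|β̂|₁ - |β*|₁ ≤ |h|₁ / 3`, and weak sparsity of `β*` turns this into
`|h|₁ ≤ 3 |h|_∞ ^ (1 - q) s`, because `min x t ≤ t ^ (1 - q) x ^ q`. When the first bound is
substituted into the last one, the smallness condition on `λ` lets the `|h|₁` term be absorbed.
The sup norm of a vector is the norm `‖·‖` of the product space `Fin p → ℝ`.
-/

section Norms

variable {p : ℕ}

lemma vecL1_nonneg (a : Fin p → ℝ) : 0 ≤ vecL1 a :=
  Finset.sum_nonneg fun _ _ => abs_nonneg _

lemma vecL1_add_le (a b : Fin p → ℝ) : vecL1 (a + b) ≤ vecL1 a + vecL1 b := by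
  unfold vecL1
  rw [← Finset.sum_add_distrib]
  exact Finset.sum_le_sum fun _ _ => abs_add_le _ _

lemma vecL1_smul (c : ℝ) (a : Fin p → ℝ) : vecL1 (c • a) = |c| * vecL1 a := by
  simp [vecL1, abs_mul, Finset.mul_sum]

lemma vecL1_single (j : Fin p) (c : ℝ) : vecL1 (Pi.single j c) = |c| := by
  unfold vecL1
  rw [Finset.sum_eq_single j (fun k _ hk => by simp [hk]) (by simp), Pi.single_eq_same]

lemma matLinf_nonneg (A : Matrix (Fin p) (Fin p) ℝ) : 0 ≤ matLinf A :=
  Real.iSup_nonneg fun _ => Real.iSup_nonneg fun _ => abs_nonneg _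

lemma norm_row_le_matLinf (A : Matrix (Fin p) (Fin p) ℝ) (i : Fin p) : ‖A i‖ ≤ matLinf A :=
  (pi_norm_le_iff_of_nonneg (matLinf_nonneg A)).mpr fun j =>
    (le_ciSup (f := fun j => |A i j|) (Set.finite_range _).bddAbove j).trans
      (le_ciSup (f := fun i => ⨆ j, |A i j|) (Set.finite_range _).bddAbove i)

lemma sum_abs_col_le_matL1 (A : Matrix (Fin p) (Fin p) ℝ) (j : Fin p) :
    ∑ i, |A i j| ≤ matL1 A :=
  le_ciSup (f := fun j => ∑ i, |A i j|) (Set.finite_range _).bddAbove j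

lemma matL1_nonneg (A : Matrix (Fin p) (Fin p) ℝ) : 0 ≤ matL1 A :=
  Real.iSup_nonneg fun _ => Finset.sum_nonneg fun _ _ => abs_nonneg _

lemma abs_dotProduct_le_norm_mul_vecL1 (a b : Fin p → ℝ) : |a ⬝ᵥ b| ≤ ‖a‖ * vecL1 b :=
  calc |a ⬝ᵥ b| ≤ ∑ j, |a j * b j| := Finset.abs_sum_le_sum_abs _ _
    _ ≤ ∑ j, ‖a‖ * |b j| := Finset.sum_le_sum fun j _ => by
        rw [abs_mul]
        exact mul_le_mul_of_nonneg_right (norm_le_pi_norm a j) (abs_nonneg _)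
    _ = ‖a‖ * vecL1 b := (Finset.mul_sum _ _ _).symm

lemma norm_mulVec_le_matLinf_mul_vecL1 (A : Matrix (Fin p) (Fin p) ℝ) (v : Fin p → ℝ) :
    ‖A *ᵥ v‖ ≤ matLinf A * vecL1 v :=
  (pi_norm_le_iff_of_nonneg (mul_nonneg (matLinf_nonneg A) (vecL1_nonneg v))).mpr fun i =>
    (abs_dotProduct_le_norm_mul_vecL1 (A i) v).trans
      (mul_le_mul_of_nonneg_right (norm_row_le_matLinf A i) (vecL1_nonneg v))

lemma norm_vecMul_le_matL1_mul_norm (v : Fin p → ℝ) (A : Matrix (Fin p) (Fin p) ℝ) :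
    ‖v ᵥ* A‖ ≤ matL1 A * ‖v‖ :=
  (pi_norm_le_iff_of_nonneg (mul_nonneg (matL1_nonneg A) (norm_nonneg v))).mpr fun j =>
    calc |v ⬝ᵥ fun i => A i j| ≤ ‖v‖ * vecL1 fun i => A i j :=
          abs_dotProduct_le_norm_mul_vecL1 v _
      _ ≤ ‖v‖ * matL1 A :=
          mul_le_mul_of_nonneg_left (sum_abs_col_le_matL1 A j) (norm_nonneg v)
      _ = matL1 A * ‖v‖ := mul_comm _ _

lemma vecL1_mulVec_le_matL1_mul_vecL1 (A : Matrix (Fin p) (Fin p) ℝ) (v : Fin p → ℝ) :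
    vecL1 (A *ᵥ v) ≤ matL1 A * vecL1 v :=
  calc vecL1 (A *ᵥ v) ≤ ∑ i, ∑ j, |A i j| * |v j| := Finset.sum_le_sum fun i _ =>
        (Finset.abs_sum_le_sum_abs (fun j => A i j * v j) Finset.univ).trans_eq
          (Finset.sum_congr rfl fun j _ => abs_mul (A i j) (v j))
    _ = ∑ j, (∑ i, |A i j|) * |v j| := by
        rw [Finset.sum_comm]
        simp only [Finset.sum_mul]
    _ ≤ ∑ j, matL1 A * |v j| := Finset.sum_le_sum fun j _ =>
        mul_le_mul_of_nonneg_right (sum_abs_col_le_matL1 A j) (abs_nonneg _)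
    _ = matL1 A * vecL1 v := (Finset.mul_sum _ _ _).symm

end Norms

section WeakSparsity

lemma min_le_rpow_mul_rpow {x t q : ℝ} (hx : 0 ≤ x) (ht : 0 ≤ t) (hq0 : 0 ≤ q) (hq1 : q ≤ 1) :
    min x t ≤ t ^ (1 - q) * x ^ q := by
  have hmin : 0 ≤ min x t := le_min hx ht
  calc min x t = min x t ^ (1 - q) * min x t ^ q := by
        rw [← Real.rpow_add_of_nonneg hmin (sub_nonneg.mpr hq1) hq0, sub_add_cancel,
          Real.rpow_one]
    _ ≤ t ^ (1 - q) * x ^ q :=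
        mul_le_mul (Real.rpow_le_rpow hmin (min_le_right _ _) (sub_nonneg.mpr hq1))
          (Real.rpow_le_rpow hmin (min_le_left _ _) hq0) (by positivity) (by positivity)

lemma sum_min_abs_le_rpow_mul_sum {ι : Type*} [Fintype ι] (b : ι → ℝ) {t q : ℝ} (ht : 0 ≤ t)
    (hq0 : 0 ≤ q) (hq1 : q ≤ 1) : ∑ j, min |b j| t ≤ t ^ (1 - q) * ∑ j, |b j| ^ q := by
  rw [Finset.mul_sum]
  exact Finset.sum_le_sum fun j _ => min_le_rpow_mul_rpow (abs_nonneg _) ht hq0 hq1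

lemma vecL1_sub_le_add_sum_min {p : ℕ} (a b : Fin p → ℝ) :
    vecL1 (a - b) ≤ vecL1 a - vecL1 b + 2 * ∑ j, min |b j| ‖a - b‖ := by
  unfold vecL1
  rw [Finset.mul_sum, ← Finset.sum_sub_distrib, ← Finset.sum_add_distrib]
  refine Finset.sum_le_sum fun j _ => ?_
  have hsup : |a j - b j| ≤ ‖a - b‖ := norm_le_pi_norm (a - b) j
  have hrev : |b j| - |a j| ≤ |a j - b j| := by
    rw [abs_sub_comm]
    exact abs_sub_abs_le_abs_sub _ _
  rw [Pi.sub_apply]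
  rcases min_choice |b j| ‖a - b‖ with hm | hm <;> rw [hm]
  · linarith [abs_sub (a j) (b j)]
  · linarith

end WeakSparsity

section Minimizer

variable {p : ℕ} {S : Matrix (Fin p) (Fin p) ℝ} {e βhat : Fin p → ℝ} {lam : ℝ}

lemma scioObj_add (hS : S.IsSymm) (e : Fin p → ℝ) (lam : ℝ) (β d : Fin p → ℝ) :
    scioObj S e lam (β + d) = scioObj S e lam β + (S *ᵥ β - e) ⬝ᵥ d
      + 1 / 2 * (d ⬝ᵥ S *ᵥ d) + lam * (vecL1 (β + d) - vecL1 β) := by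
  have hsymm : β ⬝ᵥ S *ᵥ d = d ⬝ᵥ S *ᵥ β := by
    rw [dotProduct_mulVec, dotProduct_comm, ← mulVec_transpose, hS.eq]
  unfold scioObj
  simp only [mulVec_add, dotProduct_add, add_dotProduct, sub_dotProduct, hsymm,
    dotProduct_comm (S *ᵥ β) d]
  ring

open scoped Topology in
lemma nonneg_and_nonneg_of_forall_pos_add_mul {a b : ℝ} (h : ∀ r : ℝ, 0 < r → 0 ≤ a + r * b) :
    0 ≤ a ∧ 0 ≤ b := by
  constructor
  · have hlim : Filter.Tendsto (fun r => a + r * b) (𝓝[>] 0) (𝓝 a) :=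
      ((by fun_prop : Continuous fun r : ℝ => a + r * b).tendsto' 0 a (by simp)).mono_left
        nhdsWithin_le_nhds
    exact ge_of_tendsto hlim (eventually_mem_nhdsWithin.mono h)
  · by_contra! hb
    have hneg := h ((|a| + 1) / -b) (div_pos (by positivity) (neg_pos.mpr hb))
    rw [div_neg, neg_mul, div_mul_cancel₀ _ hb.ne] at hneg
    linarith [le_abs_self a]

lemma slope_add_mul_curvature_nonneg_of_minimizer (hS : S.IsSymm) (hlam : 0 ≤ lam)
    (hmin : ∀ β, scioObj S e lam βhat ≤ scioObj S e lam β) (d : Fin p → ℝ) {r : ℝ} (hr : 0 < r) :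
    0 ≤ ((S *ᵥ βhat - e) ⬝ᵥ d + lam * vecL1 d) + r * (1 / 2 * (d ⬝ᵥ S *ᵥ d)) := by
  have hle := hmin (βhat + r • d)
  rw [scioObj_add hS] at hle
  simp only [mulVec_smul, dotProduct_smul, smul_dotProduct, smul_eq_mul] at hle
  have htri := vecL1_add_le βhat (r • d)
  rw [vecL1_smul, abs_of_pos hr] at htri
  have hpen := mul_le_mul_of_nonneg_left htri hlam
  refine nonneg_of_mul_nonneg_right (a := r) ?_ hr
  linarith

lemma norm_gradient_le_of_minimizer (hS : S.IsSymm) (hlam : 0 ≤ lam)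
    (hmin : ∀ β, scioObj S e lam βhat ≤ scioObj S e lam β) : ‖S *ᵥ βhat - e‖ ≤ lam := by
  have hslope (j : Fin p) (c : ℝ) (hc : |c| = 1) : 0 ≤ (S *ᵥ βhat - e) j * c + lam := by
    have h := (nonneg_and_nonneg_of_forall_pos_add_mul fun _ hr =>
      slope_add_mul_curvature_nonneg_of_minimizer hS hlam hmin (Pi.single j c) hr).1
    rwa [dotProduct_single, vecL1_single, hc, mul_one] at h
  refine (pi_norm_le_iff_of_nonneg hlam).mpr fun j => abs_le.mpr ⟨?_, ?_⟩
  · linarith [hslope j 1 (by simp)]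
  · linarith [hslope j (-1) (by simp)]

lemma quadratic_nonneg_of_minimizer (hS : S.IsSymm) (hlam : 0 ≤ lam)
    (hmin : ∀ β, scioObj S e lam βhat ≤ scioObj S e lam β) (d : Fin p → ℝ) :
    0 ≤ d ⬝ᵥ S *ᵥ d :=
  nonneg_of_mul_nonneg_right (nonneg_and_nonneg_of_forall_pos_add_mul fun _ hr =>
    slope_add_mul_curvature_nonneg_of_minimizer hS hlam hmin d hr).2 one_half_pos

lemma mul_vecL1_sub_vecL1_le_of_minimizer (hS : S.IsSymm) (hlam : 0 ≤ lam)
    (hmin : ∀ β, scioObj S e lam βhat ≤ scioObj S e lam β) (β : Fin p → ℝ) :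
    lam * (vecL1 βhat - vecL1 β) ≤ ‖S *ᵥ β - e‖ * vecL1 (βhat - β) := by
  have hexp := scioObj_add hS e lam β (βhat - β)
  rw [add_sub_cancel] at hexp
  have hholder := neg_le_of_abs_le (abs_dotProduct_le_norm_mul_vecL1 (S *ᵥ β - e) (βhat - β))
  linarith [hmin β, quadratic_nonneg_of_minimizer hS hlam hmin (βhat - β)]

lemma vecL1_sub_le_of_minimizer (hS : S.IsSymm) (hlam : 0 < lam)
    (hmin : ∀ β, scioObj S e lam βhat ≤ scioObj S e lam β) {β : Fin p → ℝ}
    (hβ : ‖S *ᵥ β - e‖ ≤ lam / 3) {q : ℝ} (hq0 : 0 ≤ q) (hq1 : q ≤ 1) :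
    vecL1 (βhat - β) ≤ 3 * (‖βhat - β‖ ^ (1 - q) * ∑ j, |β j| ^ q) := by
  have hcone : vecL1 βhat - vecL1 β ≤ vecL1 (βhat - β) / 3 := by
    refine le_of_mul_le_mul_left ?_ hlam
    calc lam * (vecL1 βhat - vecL1 β) ≤ ‖S *ᵥ β - e‖ * vecL1 (βhat - β) :=
          mul_vecL1_sub_vecL1_le_of_minimizer hS hlam.le hmin β
      _ ≤ lam / 3 * vecL1 (βhat - β) := mul_le_mul_of_nonneg_right hβ (vecL1_nonneg _)
      _ = lam * (vecL1 (βhat - β) / 3) := by ring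
  linarith [vecL1_sub_le_add_sum_min βhat β,
    sum_min_abs_le_rpow_mul_sum β (norm_nonneg (βhat - β)) hq0 hq1]

end Minimizer

section ApproximateInverse

variable {p : ℕ} {Ω : Matrix (Fin p) (Fin p) ℝ}

lemma norm_mulVec_mulVec_sub_le (hΩ : IsUnit Ω.det) (S : Matrix (Fin p) (Fin p) ℝ)
    (e : Fin p → ℝ) :
    ‖S *ᵥ (Ω *ᵥ e) - e‖ ≤ matL1 Ω * matLinf (S - Ω⁻¹) * vecL1 e :=
  calc ‖S *ᵥ (Ω *ᵥ e) - e‖ = ‖(S - Ω⁻¹) *ᵥ (Ω *ᵥ e)‖ := by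
        rw [sub_mulVec, mulVec_mulVec e Ω⁻¹, nonsing_inv_mul _ hΩ, one_mulVec]
    _ ≤ matLinf (S - Ω⁻¹) * vecL1 (Ω *ᵥ e) := norm_mulVec_le_matLinf_mul_vecL1 _ _
    _ ≤ matLinf (S - Ω⁻¹) * (matL1 Ω * vecL1 e) :=
        mul_le_mul_of_nonneg_left (vecL1_mulVec_le_matL1_mul_vecL1 Ω e) (matLinf_nonneg _)
    _ = matL1 Ω * matLinf (S - Ω⁻¹) * vecL1 e := by ring

lemma norm_le_matL1_mul_norm_mulVec_add (hΩsym : Ω.IsSymm) (hΩ : IsUnit Ω.det)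
    (S : Matrix (Fin p) (Fin p) ℝ) (v : Fin p → ℝ) :
    ‖v‖ ≤ matL1 Ω * (‖S *ᵥ v‖ + matLinf (S - Ω⁻¹) * vecL1 v) :=
  calc ‖v‖ = ‖(Ω⁻¹ *ᵥ v) ᵥ* Ω‖ := by
        rw [← mulVec_transpose, hΩsym.eq, mulVec_mulVec, mul_nonsing_inv _ hΩ, one_mulVec]
    _ ≤ matL1 Ω * ‖Ω⁻¹ *ᵥ v‖ := norm_vecMul_le_matL1_mul_norm _ _
    _ = matL1 Ω * ‖S *ᵥ v - (S - Ω⁻¹) *ᵥ v‖ := by rw [sub_mulVec, sub_sub_cancel]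
    _ ≤ matL1 Ω * (‖S *ᵥ v‖ + matLinf (S - Ω⁻¹) * vecL1 v) :=
        mul_le_mul_of_nonneg_left ((norm_sub_le _ _).trans
          (add_le_add_right (norm_mulVec_le_matLinf_mul_vecL1 _ _) _)) (matL1_nonneg Ω)

lemma norm_sub_le_of_minimizer (hΩsym : Ω.IsSymm) (hΩ : IsUnit Ω.det)
    {S : Matrix (Fin p) (Fin p) ℝ} (hS : S.IsSymm) {e βhat β : Fin p → ℝ} {lam : ℝ}
    (hlam : 0 ≤ lam) (hmin : ∀ β, scioObj S e lam βhat ≤ scioObj S e lam β)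
    (hβ : ‖S *ᵥ β - e‖ ≤ lam / 3) :
    ‖βhat - β‖ ≤ matL1 Ω * (4 / 3 * lam + matLinf (S - Ω⁻¹) * vecL1 (βhat - β)) := by
  have hgrad : ‖S *ᵥ (βhat - β)‖ ≤ 4 / 3 * lam := by
    rw [mulVec_sub, ← sub_sub_sub_cancel_right _ _ e]
    linarith [norm_sub_le (S *ᵥ βhat - e) (S *ᵥ β - e),
      norm_gradient_le_of_minimizer hS hlam hmin]
  exact (norm_le_matL1_mul_norm_mulVec_add hΩsym hΩ S (βhat - β)).trans
    (mul_le_mul_of_nonneg_left (add_le_add_left hgrad _) (matL1_nonneg Ω))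

end ApproximateInverse

lemma le_of_le_rpow_of_le_add {q s L lam x η : ℝ} (hq0 : 0 ≤ q) (hq1 : q ≤ 1) (hs : 0 ≤ s)
    (hL : 0 < L) (hlam : 0 ≤ lam) (hx : 0 ≤ x) (hη : 0 ≤ η)
    (hsmall : L ^ (-q) * lam ^ (1 - q) * s ≤ 1 / 2)
    (hηx : η ≤ 4 / 3 * (L * lam) + lam / 3 * x) (hxη : x ≤ 3 * (η ^ (1 - q) * s)) :
    x ≤ 8 * L ^ (1 - q) * s * lam ^ (1 - q) := by
  set c := 4 / 3 + x / (3 * L)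
  set K := L ^ (1 - q) * s * lam ^ (1 - q)
  have hc : 1 ≤ c := le_add_of_le_of_nonneg (by norm_num) (by positivity)
  have hηc : η ≤ c * (L * lam) := hηx.trans_eq <| by
    simp only [c]
    field_simp
  have hpow : η ^ (1 - q) * s ≤ c * K :=
    calc η ^ (1 - q) * s ≤ (c * (L * lam)) ^ (1 - q) * s := by gcongr
      _ = c ^ (1 - q) * K := by
          rw [Real.mul_rpow (by positivity) (by positivity), Real.mul_rpow hL.le hlam]
          simp only [K]
          ring
      _ ≤ c * K := by
          gcongr
          exact Real.rpow_le_self_of_one_le hc (by linarith)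
  have hK : K / L ≤ 1 / 2 := by
    refine hsmall.trans_eq' ?_
    rw [show (-q) = (1 - q) - 1 by ring, Real.rpow_sub_one hL.ne']
    simp only [K]
    ring
  have habsorb : x * (K / L) ≤ x * (1 / 2) := mul_le_mul_of_nonneg_left hK hx
  have hcK : c * K = 4 / 3 * K + x * (K / L) / 3 := by
    simp only [c]
    field_simp
  calc x ≤ 8 * K := by linarith
    _ = 8 * L ^ (1 - q) * s * lam ^ (1 - q) := by
        simp only [K]
        ring

theorem scio_column_l1_bound_general {p : ℕ} {q s lam : ℝ} (hq0 : 0 ≤ q) (hq1 : q ≤ 1)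
    {Ω : Matrix (Fin p) (Fin p) ℝ} (hΩsym : Ω.IsSymm) (hΩ : IsUnit Ω.det)
    {Shat : Matrix (Fin p) (Fin p) ℝ} (hSsym : Shat.IsSymm)
    (hlam1 : 3 * matL1 Ω * matLinf (Shat - Ω⁻¹) ≤ lam)
    (hlam2 : (matL1 Ω) ^ (-q) * lam ^ (1 - q) * s ≤ 1 / 2)
    {e : Fin p → ℝ} (he : vecL1 e ≤ 1) (hsparse : ∑ j, |(Ω *ᵥ e) j| ^ q ≤ s)
    {βhat : Fin p → ℝ} (hmin : ∀ β, scioObj Shat e lam βhat ≤ scioObj Shat e lam β) :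
    vecL1 (βhat - Ω *ᵥ e) ≤ 8 * (matL1 Ω) ^ (1 - q) * s * lam ^ (1 - q) := by
  have hL0 := matL1_nonneg Ω
  have hδ0 := matLinf_nonneg (Shat - Ω⁻¹)
  have hlam0 : 0 ≤ lam := hlam1.trans' (by positivity)
  have hs : 0 ≤ s := hsparse.trans' (by positivity)
  have hx := vecL1_nonneg (βhat - Ω *ᵥ e)
  have hres : ‖Shat *ᵥ (Ω *ᵥ e) - e‖ ≤ lam / 3 := by
    linarith [norm_mulVec_mulVec_sub_le hΩ Shat e,
      mul_le_of_le_one_right (mul_nonneg hL0 hδ0) he]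
  have hinv := norm_sub_le_of_minimizer hΩsym hΩ hSsym hlam0 hmin hres
  have hsup : ‖βhat - Ω *ᵥ e‖
      ≤ 4 / 3 * (matL1 Ω * lam) + lam / 3 * vecL1 (βhat - Ω *ᵥ e) := by
    linarith [mul_le_mul_of_nonneg_right hlam1 hx]
  rcases eq_or_ne (βhat - Ω *ᵥ e) 0 with hzero | hne
  · rw [hzero, show vecL1 (0 : Fin p → ℝ) = 0 by simp [vecL1]]
    positivity
  have hpos : 0 < ‖βhat - Ω *ᵥ e‖ := norm_pos_iff.mpr hne
  have hL : 0 < matL1 Ω := pos_of_mul_pos_left (hpos.trans_le hinv) (by positivity)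
  have hlam : 0 < lam := hlam0.lt_of_ne' fun h =>
    hne (norm_le_zero_iff.mp (hsup.trans_eq (by rw [h]; ring)))
  refine le_of_le_rpow_of_le_add hq0 hq1 hs hL hlam0 hx hpos.le hlam2 hsup ?_
  refine (vecL1_sub_le_of_minimizer hSsym hlam hmin hres hq0 hq1).trans ?_
  gcongr

/-- Theorem 1 (ℓ1 bound): for Ω in the weak-sparsity class U_q(s_p, M_p), any global
minimizer β̂ of the SCIO objective with target column β* = Ω e_i satisfies
|β̂ − β*|₁ ≤ 16 ‖Ω‖_{L1}^{1−q} s_p λ^{1−q}. -/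
theorem scio_column_l1_bound {p : ℕ} (q s M : ℝ) (hq0 : 0 ≤ q) (hq1 : q < 1)
    (hs : 0 < s) (hM : 0 < M)
    (Ω : Matrix (Fin p) (Fin p) ℝ) (hΩsym : Ω.IsSymm) (hΩpd : Ω.PosDef)
    (hΩs : ∀ j, ∑ i, |Ω i j| ^ q ≤ s) (hΩM : matL1 Ω ≤ M)
    (Shat : Matrix (Fin p) (Fin p) ℝ) (hSsym : Shat.IsSymm)
    (lam : ℝ) (hlam0 : 0 ≤ lam)
    (hlam1 : 3 * matL1 Ω * matLinf (Shat - Ω⁻¹) ≤ lam)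
    (hlam2 : (matL1 Ω) ^ (-q) * lam ^ (1 - q) * s ≤ 1 / 2)
    (i : Fin p) (βstar : Fin p → ℝ) (hβstar : βstar = Ω.mulVec (Pi.single i 1))
    (βhat : Fin p → ℝ)
    (hmin : ∀ β : Fin p → ℝ,
      scioObj Shat (Pi.single i 1) lam βhat ≤ scioObj Shat (Pi.single i 1) lam β) :
    vecL1 (βhat - βstar) ≤ 16 * (matL1 Ω) ^ (1 - q) * s * lam ^ (1 - q) := by
  have hL := matL1_nonneg Ω
  rw [hβstar]
  calc vecL1 (βhat - Ω *ᵥ Pi.single i 1) ≤ 8 * (matL1 Ω) ^ (1 - q) * s * lam ^ (1 - q) :=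
        scio_column_l1_bound_general hq0 hq1.le hΩsym hΩpd.det_pos.ne'.isUnit hSsym hlam1 hlam2
          (by simp [vecL1_single]) (by simpa using hΩs i) hmin
    _ ≤ 16 * (matL1 Ω) ^ (1 - q) * s * lam ^ (1 - q) := by gcongr; norm_num
end

section
/- Let Σ̂ ∈ ℝ^{p×p} be symmetric positive semidefinite, let Σ ∈ ℝ^{p×p}, e ∈ ℝ^p, and let β* ∈ ℝ^p satisfy Σβ* = e. Then for every β̂ ∈ ℝ^p, (β̂ − β*)ᵀ(Σ̂β̂ − e) ≥ −‖Σ̂ − Σ‖_∞ · |β*|_1 · |β̂ − β*|_1. -/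
open Matrix
open scoped BigOperators

theorem abs_apply_le_matLinf {p : ℕ} (A : Matrix (Fin p) (Fin p) ℝ) (i j : Fin p) :
    |A i j| ≤ matLinf A :=
  (Finite.le_ciSup (fun j => |A i j|) j).trans (Finite.le_ciSup (fun i => ⨆ j, |A i j|) i)

section OrderedRing

variable {m n R : Type*} [Fintype m] [Fintype n]
  [CommRing R] [LinearOrder R] [IsOrderedRing R]

theorem abs_dotProduct_le_mul_sum_abs {u : n → R} {C : R} (hu : ∀ i, |u i| ≤ C) (v : n → R) :
    |u ⬝ᵥ v| ≤ C * ∑ i, |v i| :=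
  calc |u ⬝ᵥ v| ≤ ∑ i, |u i * v i| := Finset.abs_sum_le_sum_abs _ _
    _ ≤ ∑ i, C * |v i| := Finset.sum_le_sum fun i _ => by
      rw [abs_mul]
      exact mul_le_mul_of_nonneg_right (hu i) (abs_nonneg _)
    _ = C * ∑ i, |v i| := (Finset.mul_sum ..).symm

theorem abs_dotProduct_mulVec_le_mul_sum_abs {A : Matrix m n R} {C : R}
    (hA : ∀ i j, |A i j| ≤ C) (u : m → R) (v : n → R) :
    |u ⬝ᵥ A *ᵥ v| ≤ C * (∑ j, |v j|) * ∑ i, |u i| := by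
  rw [dotProduct_comm]
  exact abs_dotProduct_le_mul_sum_abs (fun i => abs_dotProduct_le_mul_sum_abs (hA i) v) u

theorem scio_quadratic_lower_bound_general {Shat S : Matrix n n R} {C : R}
    (hC : ∀ i j, |(Shat - S) i j| ≤ C) {e βstar : n → R} (hβstar : S *ᵥ βstar = e) {βhat : n → R}
    (hShat : 0 ≤ (βhat - βstar) ⬝ᵥ Shat *ᵥ (βhat - βstar)) :
    -C * (∑ i, |βstar i|) * ∑ i, |(βhat - βstar) i| ≤ (βhat - βstar) ⬝ᵥ (Shat *ᵥ βhat - e) := by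
  have hdecomp : Shat *ᵥ βhat - e = Shat *ᵥ (βhat - βstar) + (Shat - S) *ᵥ βstar := by
    rw [← hβstar, mulVec_sub, sub_mulVec, sub_add_sub_cancel]
  calc -C * (∑ i, |βstar i|) * ∑ i, |(βhat - βstar) i|
      = -(C * (∑ i, |βstar i|) * ∑ i, |(βhat - βstar) i|) := by ring
    _ ≤ (βhat - βstar) ⬝ᵥ (Shat - S) *ᵥ βstar :=
      neg_le_of_abs_le (abs_dotProduct_mulVec_le_mul_sum_abs hC _ _)
    _ ≤ (βhat - βstar) ⬝ᵥ Shat *ᵥ (βhat - βstar) + (βhat - βstar) ⬝ᵥ (Shat - S) *ᵥ βstar :=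
      le_add_of_nonneg_left hShat
    _ = (βhat - βstar) ⬝ᵥ (Shat *ᵥ βhat - e) := by rw [hdecomp, dotProduct_add]

end OrderedRing

/-- Lower bound for the quadratic form: if Σ̂ is PSD and Σβ* = e, then for every β̂,
(β̂ − β*)ᵀ(Σ̂ β̂ − e) ≥ −‖Σ̂ − Σ‖_∞ |β*|₁ |β̂ − β*|₁. -/
theorem scio_quadratic_lower_bound {p : ℕ}
    (Shat : Matrix (Fin p) (Fin p) ℝ) (hSpsd : Shat.PosSemidef)
    (S : Matrix (Fin p) (Fin p) ℝ) (e : Fin p → ℝ)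
    (βstar : Fin p → ℝ) (hβstar : S.mulVec βstar = e)
    (βhat : Fin p → ℝ) :
    -(matLinf (Shat - S)) * vecL1 βstar * vecL1 (βhat - βstar) ≤
      (βhat - βstar) ⬝ᵥ (Shat.mulVec βhat - e) :=
  scio_quadratic_lower_bound_general (abs_apply_le_matLinf (Shat - S)) hβstar
    (hSpsd.dotProduct_mulVec_nonneg (βhat - βstar))
end

section
/- Let β*, β̂ ∈ ℝ^p and set h = β* − β̂. If 3(|β*|_1 − |β̂|_1) ≥ −|h|_1, then for every index set J ⊆ {1,…,p}, |h_{J^c}|_1 ≤ 2|h_J|_1 + 3|β*_{J^c}|_1. -/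
open scoped BigOperators

/-!
On `J` the difference `‖x i‖ - ‖y i‖` is at most `‖x i - y i‖`, while on `Jᶜ` the triangle
inequality `‖x i - y i‖ ≤ ‖x i‖ + ‖y i‖` bounds it by `2 * ‖x i‖ - ‖x i - y i‖`. The error on `Jᶜ`
thus enters with a negative sign; after scaling by `c > 1` it outweighs the single copy of it that
the hypothesis `-‖x - y‖₁ ≤ c * (‖x‖₁ - ‖y‖₁)` puts on the other side.
-/

section ConeInequality

variable {ι E : Type*} [SeminormedAddGroup E]

theorem sum_norm_sub_sum_norm_le (s : Finset ι) (x y : ι → E) :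
    ∑ i ∈ s, ‖x i‖ - ∑ i ∈ s, ‖y i‖ ≤ ∑ i ∈ s, ‖(x - y) i‖ := by
  rw [← Finset.sum_sub_distrib]
  exact Finset.sum_le_sum fun i _ => sub_le_iff_le_add.2 (norm_le_norm_sub_add (x i) (y i))

theorem sum_norm_sub_le (s : Finset ι) (x y : ι → E) :
    ∑ i ∈ s, ‖(x - y) i‖ ≤ ∑ i ∈ s, ‖x i‖ + ∑ i ∈ s, ‖y i‖ := by
  rw [← Finset.sum_add_distrib]
  exact Finset.sum_le_sum fun i _ => norm_sub_le (x i) (y i)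

variable [Fintype ι] [DecidableEq ι]

theorem sum_norm_sub_sum_norm_le_add_compl (x y : ι → E) (J : Finset ι) :
    ∑ i, ‖x i‖ - ∑ i, ‖y i‖ ≤
      ∑ i ∈ J, ‖(x - y) i‖ + (2 * ∑ i ∈ Jᶜ, ‖x i‖ - ∑ i ∈ Jᶜ, ‖(x - y) i‖) := by
  have on_J := sum_norm_sub_sum_norm_le J x y
  have on_compl := sum_norm_sub_le Jᶜ x y
  rw [← Finset.sum_add_sum_compl J fun i => ‖x i‖, ← Finset.sum_add_sum_compl J fun i => ‖y i‖]
  linarith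

theorem cone_inequality_general {c : ℝ} (hc : 0 ≤ c) (x y : ι → E)
    (hxy : -∑ i, ‖(x - y) i‖ ≤ c * (∑ i, ‖x i‖ - ∑ i, ‖y i‖)) (J : Finset ι) :
    (c - 1) * ∑ i ∈ Jᶜ, ‖(x - y) i‖ ≤
      (c + 1) * ∑ i ∈ J, ‖(x - y) i‖ + 2 * c * ∑ i ∈ Jᶜ, ‖x i‖ := by
  have upper := mul_le_mul_of_nonneg_left (sum_norm_sub_sum_norm_le_add_compl x y J) hc
  rw [← Finset.sum_add_sum_compl J fun i => ‖(x - y) i‖] at hxy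
  linarith

end ConeInequality

/-- Cone-type inequality: if 3(|β*|₁ − |β̂|₁) ≥ −|h|₁ where h = β* − β̂, then for every
index set J, |h_{Jᶜ}|₁ ≤ 2|h_J|₁ + 3|β*_{Jᶜ}|₁. -/
theorem cone_inequality {p : ℕ} (βstar βhat : Fin p → ℝ) (h : Fin p → ℝ)
    (hh : h = βstar - βhat)
    (hineq : -(∑ j, |h j|) ≤ 3 * ((∑ j, |βstar j|) - ∑ j, |βhat j|))
    (J : Finset (Fin p)) :
    ∑ j ∈ Jᶜ, |h j| ≤ 2 * ∑ j ∈ J, |h j| + 3 * ∑ j ∈ Jᶜ, |βstar j| := by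
  simp only [hh, ← Real.norm_eq_abs] at hineq ⊢
  linarith [cone_inequality_general zero_le_three βstar βhat hineq J]
end

section
/- Let β̂, β̃ ∈ ℝ^p with |β̃|_1 ≤ |β̂|_1. Then for every index set J ⊆ {1,…,p}, |β̃ − β̂|_1 ≤ 2( |(β̂ − β̃)_J|_1 + |β̂_{J^c}|_1 ). -/
open scoped BigOperators

/-! The two forms of the triangle inequality combine to
`‖x - y‖ ≤ ‖x‖ - ‖y‖ + 2 * min ‖x - y‖ ‖y‖`. Summed over all coordinates, the differences
`‖x‖ - ‖y‖` contribute at most `0`, which leaves twice the sum of the minima; each minimum is then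
bounded by its first argument on `J` and by its second argument off `J`. -/

theorem norm_sub_le_norm_sub_norm_add_two_mul_min {E : Type*} [SeminormedAddCommGroup E]
    (x y : E) : ‖x - y‖ ≤ ‖x‖ - ‖y‖ + 2 * min ‖x - y‖ ‖y‖ := by
  rcases min_choice ‖x - y‖ ‖y‖ with hmin | hmin <;> rw [hmin]
  · linarith [norm_le_norm_add_norm_sub x y]
  · linarith [norm_sub_le x y]

theorem sum_min_le_sum_add_sum_sdiff {ι M : Type*} [DecidableEq ι] [AddCommMonoid M]
    [LinearOrder M] [IsOrderedAddMonoid M] {s t : Finset ι} (hts : t ⊆ s) (a b : ι → M) :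
    ∑ i ∈ s, min (a i) (b i) ≤ ∑ i ∈ t, a i + ∑ i ∈ s \ t, b i := by
  rw [← Finset.sum_sdiff hts, add_comm]
  exact add_le_add (Finset.sum_le_sum fun _ _ => min_le_left _ _)
    (Finset.sum_le_sum fun _ _ => min_le_right _ _)

section FiniteSums

variable {ι E : Type*} [SeminormedAddCommGroup E] {s : Finset ι} {f g : ι → E}

theorem sum_norm_sub_le_two_mul_sum_min (hfg : ∑ i ∈ s, ‖f i‖ ≤ ∑ i ∈ s, ‖g i‖) :
    ∑ i ∈ s, ‖f i - g i‖ ≤ 2 * ∑ i ∈ s, min ‖f i - g i‖ ‖g i‖ :=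
  calc
    ∑ i ∈ s, ‖f i - g i‖
    _ ≤ ∑ i ∈ s, (‖f i‖ - ‖g i‖ + 2 * min ‖f i - g i‖ ‖g i‖) :=
      Finset.sum_le_sum fun i _ => norm_sub_le_norm_sub_norm_add_two_mul_min (f i) (g i)
    _ = (∑ i ∈ s, ‖f i‖ - ∑ i ∈ s, ‖g i‖) + 2 * ∑ i ∈ s, min ‖f i - g i‖ ‖g i‖ := by
      rw [Finset.sum_add_distrib, Finset.sum_sub_distrib, Finset.mul_sum]
    _ ≤ 2 * ∑ i ∈ s, min ‖f i - g i‖ ‖g i‖ :=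
      add_le_of_nonpos_left (sub_nonpos.mpr hfg)

theorem symmetrization_l1_inequality_general [DecidableEq ι]
    (hfg : ∑ i ∈ s, ‖f i‖ ≤ ∑ i ∈ s, ‖g i‖) {J : Finset ι} (hJ : J ⊆ s) :
    ∑ i ∈ s, ‖f i - g i‖ ≤ 2 * (∑ i ∈ J, ‖f i - g i‖ + ∑ i ∈ s \ J, ‖g i‖) :=
  (sum_norm_sub_le_two_mul_sum_min hfg).trans <|
    mul_le_mul_of_nonneg_left (sum_min_le_sum_add_sum_sdiff hJ _ _) zero_le_two

end FiniteSums

/-- Symmetrization ℓ1 inequality: if |β̃|₁ ≤ |β̂|₁, then for every index set J,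
|β̃ − β̂|₁ ≤ 2(|(β̂ − β̃)_J|₁ + |β̂_{Jᶜ}|₁). -/
theorem symmetrization_l1_inequality {p : ℕ} (βhat βtilde : Fin p → ℝ)
    (hle : (∑ j, |βtilde j|) ≤ ∑ j, |βhat j|)
    (J : Finset (Fin p)) :
    ∑ j, |βtilde j - βhat j| ≤
      2 * ((∑ j ∈ J, |βhat j - βtilde j|) + ∑ j ∈ Jᶜ, |βhat j|) := by
  simpa only [Real.norm_eq_abs, abs_sub_comm (βhat _), Finset.compl_eq_univ_sdiff] using
    symmetrization_l1_inequality_general (f := βtilde) (g := βhat) hle (Finset.subset_univ J)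
end
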